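/- arXiv:1603.05026 — 2 statements merged into one kernel-verified Lean document; each statement's English description precedes it below -/
import Mathlib

section
/- The image of the open unit disc D = {z : |z| < 1} under the Koebe function k(z) = z / (1 - z)² equals the complement in ℂ of the real ray (-∞, -1/4]; that is, k '' D = {w : ℂ | ¬(w.im = 0 ∧ w.re ≤ -1/4)}. -/
/-!
The Koebe function is `z ↦ (u ^ 2 - 1) / 4` with `u = (1 + z) / (1 - z)`. The Cayley transform
`z ↦ u` carries the unit disc onto the right half-plane, squaring carries the right half-plane onto
the plane slit along `(-∞, 0]`, and the affine map `v ↦ (v - 1) / 4` moves the slit to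
`(-∞, -1/4]`.
-/

open Complex Metric Set

section Cayley

variable {K : Type*} [Field K]

/-- The Cayley transform, in the normalization that takes the unit disc of `ℂ` to the right
half-plane. At the pole `z = 1` it has the junk value `0`. -/
def cayley (z : K) : K := (1 + z) / (1 - z)

theorem cayley_sub_one_div_add_one {u : K} (h2 : (2 : K) ≠ 0) (hu : u + 1 ≠ 0) :
    cayley ((u - 1) / (u + 1)) = u := by
  have hnum : 1 + (u - 1) / (u + 1) = 2 * u / (u + 1) := by field_simp; ring
  have hden : 1 - (u - 1) / (u + 1) = 2 / (u + 1) := by field_simp; ring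
  rw [cayley, hnum, hden, div_div_div_cancel_right₀ hu, mul_div_cancel_left₀ u h2]

theorem div_one_sub_sq_eq_cayley_sq_sub_one_div_four {z : K} (h2 : (2 : K) ≠ 0) (hz : z ≠ 1) :
    z / (1 - z) ^ 2 = (cayley z ^ 2 - 1) / 4 := by
  have hz' : 1 - z ≠ 0 := sub_ne_zero.2 hz.symm
  have h4 : (4 : K) ≠ 0 := by simpa [show (4 : K) = 2 ^ 2 by norm_num] using h2
  rw [cayley]
  field_simp
  ring

end Cayley

theorem cayley_re (z : ℂ) : (cayley z).re = (1 - ‖z‖ ^ 2) / ‖1 - z‖ ^ 2 := by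
  simp only [cayley, div_re, ← normSq_eq_norm_sq, normSq_apply, add_re, add_im, sub_re, sub_im,
    one_re, one_im]
  ring

theorem cayley_re_pos_iff {z : ℂ} : 0 < (cayley z).re ↔ ‖z‖ < 1 := by
  rcases eq_or_ne z 1 with rfl | hz
  · simp [cayley]
  have hden : 0 < ‖1 - z‖ ^ 2 := by
    have := sub_ne_zero.2 hz.symm
    positivity
  rw [cayley_re, div_pos_iff_of_pos_right hden, sub_pos, sq_lt_one_iff₀ (norm_nonneg z)]

theorem image_cayley_ball : cayley '' ball (0 : ℂ) 1 = {u | 0 < u.re} := by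
  refine Subset.antisymm ?_ fun u (hu : 0 < u.re) ↦ ?_
  · rintro _ ⟨z, hz, rfl⟩
    exact cayley_re_pos_iff.2 (mem_ball_zero_iff.1 hz)
  · have hu' : u + 1 ≠ 0 := ne_of_apply_ne re (by simpa using (by linarith : u.re + 1 ≠ 0))
    have hcayley := cayley_sub_one_div_add_one two_ne_zero hu'
    refine ⟨(u - 1) / (u + 1), mem_ball_zero_iff.2 (cayley_re_pos_iff.1 ?_), hcayley⟩
    rwa [hcayley]

theorem sq_mem_slitPlane_iff {u : ℂ} : u ^ 2 ∈ slitPlane ↔ u.re ≠ 0 := by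
  have hre : (u ^ 2).re = u.re ^ 2 - u.im ^ 2 := by simp [pow_two]
  have him : (u ^ 2).im = 2 * (u.re * u.im) := by simp [pow_two]; ring
  rw [mem_slitPlane_iff, hre, him]
  rcases eq_or_ne u.re 0 with h | h
  · simp [h, sq_nonneg]
  · rcases eq_or_ne u.im 0 with h' | h'
    · simp [h, h', sq_pos_of_ne_zero]
    · simp [h, h']

theorem image_sq_re_pos : (fun u : ℂ ↦ u ^ 2) '' {u | 0 < u.re} = slitPlane := by
  refine Subset.antisymm ?_ fun v hv ↦ ?_
  · rintro _ ⟨u, hu : 0 < u.re, rfl⟩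
    exact sq_mem_slitPlane_iff.2 hu.ne'
  · have hsq : (v ^ (2⁻¹ : ℂ)) ^ 2 = v := cpow_ofNat_inv_pow v 2
    have hne : (v ^ (2⁻¹ : ℂ)).re ≠ 0 := sq_mem_slitPlane_iff.1 (hsq.symm ▸ hv)
    have hnonneg : 0 ≤ (v ^ (2⁻¹ : ℂ)).re := cpow_inv_two_re v ▸ Real.sqrt_nonneg _
    exact ⟨v ^ (2⁻¹ : ℂ), hnonneg.lt_of_ne' hne, hsq⟩

theorem one_add_four_mul_mem_slitPlane_iff {w : ℂ} :
    1 + 4 * w ∈ slitPlane ↔ ¬(w.im = 0 ∧ w.re ≤ -(1 / 4)) := by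
  have hre : (1 + 4 * w).re = 1 + 4 * w.re := by simp
  have him : (1 + 4 * w).im = 4 * w.im := by simp
  rw [mem_slitPlane_iff, hre, him]
  grind

/-- The image of the open unit disc under the Koebe function `k z = z / (1 - z)^2`
is the complement of the real ray `(-∞, -1/4]`. -/
theorem koebe_function_image :
    (fun z : ℂ => z / (1 - z) ^ 2) '' Metric.ball (0 : ℂ) 1
      = {w : ℂ | ¬(w.im = 0 ∧ w.re ≤ -(1 / 4))} := by
  have hne_one : ∀ z ∈ ball (0 : ℂ) 1, z ≠ 1 := by
    rintro _ hz rfl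
    simp at hz
  calc (fun z : ℂ => z / (1 - z) ^ 2) '' ball (0 : ℂ) 1
    _ = (fun v : ℂ ↦ (v - 1) / 4) '' ((fun u : ℂ ↦ u ^ 2) '' (cayley '' ball (0 : ℂ) 1)) := by
      rw [image_image, image_image]
      exact image_congr fun z hz ↦
        div_one_sub_sq_eq_cayley_sq_sub_one_div_four two_ne_zero (hne_one z hz)
    _ = (fun v : ℂ ↦ (v - 1) / 4) '' slitPlane := by rw [image_cayley_ball, image_sq_re_pos]
    _ = (fun w : ℂ ↦ 1 + 4 * w) ⁻¹' slitPlane :=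
      congrFun (image_eq_preimage_of_inverse (fun v ↦ by ring) (fun w ↦ by ring)) slitPlane
    _ = {w : ℂ | ¬(w.im = 0 ∧ w.re ≤ -(1 / 4))} :=
      Set.ext fun _ ↦ one_add_four_mul_mem_slitPlane_iff
end

section
/- The point -1/4 does not belong to the image of the open unit disc D = {z : |z| < 1} under the Koebe function k(z) = z / (1 - z)². Consequently, the constant 1/4 in the Koebe quarter theorem is sharp: there is no r > 1/4 such that Metric.ball (0 : ℂ) r ⊆ k '' D. -/
/-! Clearing denominators turns `z / (1 - z) ^ 2 = -1/4` into `(z + 1) ^ 2 = 0`, so `-1` is the only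
point sent to `-1/4`, and it lies on the boundary of the unit ball. -/

theorem div_one_sub_sq_eq_neg_one_div_four_iff {K : Type*} [Field K] [NeZero (2 : K)] {z : K} :
    z / (1 - z) ^ 2 = -(1 / 4) ↔ z = -1 := by
  have two_ne : (2 : K) ≠ 0 := two_ne_zero
  have four_ne : (4 : K) ≠ 0 := by
    simpa [show (2 : K) ^ 2 = 4 by norm_num] using pow_ne_zero 2 two_ne
  rcases eq_or_ne z 1 with rfl | hz
  · -- Here `z / (1 - z) ^ 2` is the junk value `1 / 0 = 0`, so both sides are false.
    have one_ne : (1 : K) ≠ -1 := fun h ↦ two_ne (by linear_combination h)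
    simp [four_ne.symm, one_ne, eq_comm]
  have complete_square : z - -(1 / 4) * (1 - z) ^ 2 = (z + 1) ^ 2 / 4 := by
    field_simp
    ring
  calc z / (1 - z) ^ 2 = -(1 / 4) ↔ z = -(1 / 4) * (1 - z) ^ 2 :=
        div_eq_iff (pow_ne_zero 2 (sub_ne_zero.mpr hz.symm))
    _ ↔ (z + 1) ^ 2 = 0 := by
        rw [← sub_eq_zero, complete_square, div_eq_zero_iff, or_iff_left four_ne]
    _ ↔ z = -1 := by rw [sq_eq_zero_iff, add_eq_zero_iff_eq_neg]

theorem neg_one_div_four_notMem_image_ball {K : Type*} [NormedField K] [NeZero (2 : K)] :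
    -(1 / 4) ∉ (fun z : K => z / (1 - z) ^ 2) '' Metric.ball (0 : K) 1 := by
  rintro ⟨z, hz, hkz⟩
  obtain rfl : z = -1 := div_one_sub_sq_eq_neg_one_div_four_iff.mp hkz
  simp at hz

theorem koebe_quarter_sharp_general {K : Type*} [NormedField K] [NeZero (2 : K)] :
    -(1 / 4) ∉ (fun z : K => z / (1 - z) ^ 2) '' Metric.ball (0 : K) 1 ∧
    ¬ ∃ r : ℝ, ‖(1 / 4 : K)‖ < r ∧
      Metric.ball (0 : K) r ⊆ (fun z : K => z / (1 - z) ^ 2) '' Metric.ball (0 : K) 1 := by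
  refine ⟨neg_one_div_four_notMem_image_ball, ?_⟩
  rintro ⟨r, hr, hsub⟩
  have mem_ball : -(1 / 4 : K) ∈ Metric.ball (0 : K) r := by
    rwa [mem_ball_zero_iff, norm_neg]
  exact neg_one_div_four_notMem_image_ball (hsub mem_ball)

/-- Sharpness of the Koebe quarter theorem: `-1/4` is not in the image of the
unit disc under the Koebe function `k z = z / (1 - z)^2`, and consequently no
ball of radius `r > 1/4` about `0` is contained in that image. -/
theorem koebe_quarter_sharp :
    (-(1 / 4) : ℂ) ∉ (fun z : ℂ => z / (1 - z) ^ 2) '' Metric.ball (0 : ℂ) 1 ∧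
    ¬ ∃ r : ℝ, 1 / 4 < r ∧
      Metric.ball (0 : ℂ) r ⊆ (fun z : ℂ => z / (1 - z) ^ 2) '' Metric.ball (0 : ℂ) 1 := by
  have norm_quarter : ‖(1 / 4 : ℂ)‖ = 1 / 4 := by norm_num
  simpa only [norm_quarter] using koebe_quarter_sharp_general (K := ℂ)
end
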